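/- Fix a chain of subsets [n] = K_1 ⊋ K_2 ⊋ ⋯ ⊋ K_{m+1} = ∅. For each 1 ≤ s ≤ m let S_s = K_s \ K_{s+1} and let T_{S_s} ⊆ ℙ^{S_s} denote the set of points of ℙ^{S_s} all of whose homogeneous coordinates are nonzero. Then the map sending a point p ∈ O_{K_1,…,K_{m+1}} (with I-components [a_i^I]_{i∈I}) to the tuple ([a_i^{K_s}]_{i∈S_s})_{1≤s≤m} is a well-defined homeomorphism from O_{K_1,…,K_{m+1}} onto the product T_{S_1} × T_{S_2} × ⋯ × T_{S_m}; in particular O_{K_1,…,K_{m+1}} is homeomorphic to a complex torus of dimension n − m. -/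

import Mathlib

noncomputable section

open Projectivization

instance projTopology {K V : Type*} [DivisionRing K] [AddCommGroup V] [Module K V]
    [TopologicalSpace V] : TopologicalSpace (Projectivization K V) :=
  inferInstanceAs (TopologicalSpace (Quotient (projectivizationSetoid K V)))

/-- The index type of nonempty subsets of `ι`. -/
abbrev NES (ι : Type) := {I : Set ι // I.Nonempty}

/-- The ambient product `P = ∏_{∅ ≠ I ⊆ ι} ℙ^I` of projective spaces. -/
abbrev PSp (ι : Type) := (I : NES ι) → Projectivization ℂ (↥I.1 → ℂ)

/-- The subset of `ℙ^ι` consisting of points all of whose homogeneous coordinates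
are nonzero (an algebraic torus). -/
def torusSet (ι : Type) : Set (Projectivization ℂ (ι → ℂ)) := {x | ∀ i, x.rep i ≠ 0}

open Classical in
/-- The `i`-th homogeneous coordinate (for the chosen representative `rep`) of the
`K`-component of a point `p ∈ P`; junk value `0` if `i ∉ K` or `K = ∅`. -/
def pcoord (ι : Type) (p : PSp ι) (K : Set ι) (i : ι) : ℂ :=
  if h : K.Nonempty ∧ i ∈ K then (p ⟨K, h.1⟩).rep ⟨i, h.2⟩ else 0

lemma pcoord_exists_ne (ι : Type) (p : PSp ι) (K : Set ι) (hK : K.Nonempty) :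
    ∃ i, i ∈ K ∧ pcoord ι p K i ≠ 0 := by
  obtain ⟨x, hx⟩ := Function.ne_iff.mp (Projectivization.rep_nonzero (p ⟨K, hK⟩))
  refine ⟨x.1, x.2, ?_⟩
  rw [pcoord, dif_pos ⟨hK, x.2⟩]
  simpa using hx

/-- The map `ρ` from the torus to `P`, whose `I`-component is given by restricting
the homogeneous coordinates. -/
def rho (ι : Type) (x : ↥(torusSet ι)) : PSp ι := fun I =>
  Projectivization.mk ℂ (fun i : ↥I.1 => x.1.rep i.1) <| by
    obtain ⟨i, hi⟩ := I.2
    intro h0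
    exact x.2 i (by simpa using congrFun h0 ⟨i, hi⟩)

/-- `Y`, the closure of `ρ(T)` in `P`. -/
def Yn (ι : Type) : Set (PSp ι) := closure (Set.range (rho ι))

/-- The chain of a point `p ∈ P`: `chainK ι p 0 = univ` (this is `K₁` in the paper)
and `chainK ι p (ℓ+1)` (i.e. `K_{ℓ+2}`) consists of those `k ∈ chainK ι p ℓ` for which the
`k`-th homogeneous coordinate of the `chainK ι p ℓ`-component of `p` vanishes. -/
def chainK (ι : Type) (p : PSp ι) : ℕ → Set ι
  | 0 => Set.univ
  | ℓ + 1 => {k ∈ chainK ι p ℓ | pcoord ι p (chainK ι p ℓ) k = 0}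

/-- A chain of subsets `ι = K 0 ⊋ K 1 ⊋ ⋯ ⊋ K m = ∅` (written `K₁ ⊋ ⋯ ⊋ K_{m+1}` in
the paper); we extend it by `∅` beyond the `m`-th step so that it is determined by
the function `K`. -/
structure SubsetChain (ι : Type) where
  m : ℕ
  K : ℕ → Set ι
  first : K 0 = Set.univ
  strict : ∀ ℓ < m, K (ℓ + 1) ⊂ K ℓ
  last : K m = ∅
  beyond : ∀ ℓ, m ≤ ℓ → K ℓ = ∅

/-- The piece `O_{K₁,…,K_{m+1}}` of `Y`: those points of `Y` whose chain is the given one. -/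
def Ochain (ι : Type) (c : SubsetChain ι) : Set (PSp ι) :=
  {p ∈ Yn ι | ∀ ℓ ≤ c.m, chainK ι p ℓ = c.K ℓ}

/-- The subset `D_{K₁,…,K_{m+1}}` of `Y`: the points whose `K_ℓ`-component has vanishing
coordinates indexed by `K_{ℓ+1}`. -/
def Dchain (ι : Type) (c : SubsetChain ι) : Set (PSp ι) :=
  {p ∈ Yn ι | ∀ ℓ < c.m, ∀ k ∈ c.K (ℓ + 1), pcoord ι p (c.K ℓ) k = 0}

/-- The action of an element of the torus on a point of `P`:
`[a]·([b_i]_{i ∈ I})_I = ([a_i b_i]_{i ∈ I})_I`. -/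
def act (ι : Type) (t : ↥(torusSet ι)) (p : PSp ι) : PSp ι := fun I =>
  Projectivization.mk ℂ (fun i : ↥I.1 => t.1.rep i.1 * (p I).rep i) <| by
    intro h0
    obtain ⟨i, hi⟩ := Function.ne_iff.mp (Projectivization.rep_nonzero (p I))
    have h : t.1.rep i.1 * (p I).rep i = 0 := by simpa using congrFun h0 i
    exact mul_ne_zero (t.2 i.1) (by simpa using hi) h

/-- The action of a permutation `w` of `ι` on `P`: the `w(I)`-component of `w·p` is
`[a^I_{w⁻¹(j)}]_{j ∈ w(I)}`; equivalently the `J`-component of `w·p` is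
`[a^{w⁻¹(J)}_{w⁻¹(j)}]_{j ∈ J}`. -/
def permAct (ι : Type) (w : Equiv.Perm ι) (p : PSp ι) : PSp ι := fun J =>
  Projectivization.mk ℂ (fun j : ↥J.1 => pcoord ι p (⇑(w⁻¹) '' J.1) (w⁻¹ j.1)) <| by
    have hK : ((⇑(w⁻¹) : ι → ι) '' J.1).Nonempty := J.2.image _
    obtain ⟨i, hi, hne⟩ := pcoord_exists_ne ι p _ hK
    obtain ⟨j, hj, hji⟩ := hi
    intro h0
    apply hne
    have h := congrFun h0 ⟨j, hj⟩
    simpa [hji] using h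

/-! On `ρ(T)`, hence on its closure `Y`, the `I`-component and the `J`-component of a point are
proportional along `I` whenever `I ⊆ J`. For `p ∈ O` take `J = K_s` with `s` maximal such that
`I ⊆ K_s`: the `K_s`-component is nonzero exactly on `S_s`, which meets `I`, so the `I`-component is
its restriction to `I ∩ S_s` extended by zero, and `p` is determined by the tuple
`([a_i^{K_s}]_{i ∈ S_s})_s`. Conversely, any tuple with nonzero coordinates `τ_i` comes from the
limit, as `ε → 0`, of `ρ([ε ^ s(i) * τ_i])`, where `i ∈ S_{s(i)}`. Both maps are componentwise
induced by linear maps, hence continuous because `V \ {0} → ℙ(V)` is an open quotient map.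
Normalising one coordinate in each of the `m` strata turns the product of the `T_{S_s}` into
`(ℂ^×)^{n - m}`.
-/

section Projectivization

variable {K V W : Type*} [DivisionRing K] [AddCommGroup V] [Module K V] [AddCommGroup W]
  [Module K W] {F : Type*} [FunLike F V W] [LinearMapClass F K V W]

lemma map_rep_mk_eq_zero_iff (L : F) {v : V} (hv : v ≠ 0) :
    L (mk K v hv).rep = 0 ↔ L v = 0 := by
  obtain ⟨a, ha⟩ := exists_smul_eq_mk_rep K v hv
  rw [← ha, Units.smul_def, map_smul, smul_eq_zero_iff_right a.ne_zero]

lemma mk_map_rep_mk (L : F) {v : V} (hv : v ≠ 0) (hL : L (mk K v hv).rep ≠ 0) :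
    mk K (L (mk K v hv).rep) hL = mk K (L v) (mt (map_rep_mk_eq_zero_iff L hv).2 hL) := by
  obtain ⟨a, ha⟩ := exists_smul_eq_mk_rep K v hv
  refine (mk_eq_mk_iff K _ _ _ _).2 ⟨a, ?_⟩
  rw [← ha, Units.smul_def, Units.smul_def, map_smul]

variable [TopologicalSpace V] [TopologicalSpace W]

lemma isOpenQuotientMap_mk' [ContinuousConstSMul K V] :
    IsOpenQuotientMap (mk' K : {v : V // v ≠ 0} → Projectivization K V) := by
  have orbitRel_eq : projectivizationSetoid K V = MulAction.orbitRel Kˣ {v : V // v ≠ 0} :=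
    Setoid.ext fun v w => (Units.orbitRel_nonZero_iff K V v w).symm
  have : ContinuousConstSMul Kˣ {v : V // v ≠ 0} :=
    ⟨fun a => (continuous_subtype_val.const_smul a).subtype_mk _⟩
  change IsOpenQuotientMap (Quotient.mk (projectivizationSetoid K V))
  rw [orbitRel_eq]
  exact MulAction.isOpenQuotientMap_quotientMk

lemma continuous_mk {X : Type*} [TopologicalSpace X] {f : X → V} (hf : Continuous f)
    (h : ∀ x, f x ≠ 0) : Continuous fun x => mk K (f x) (h x) :=
  continuous_quotient_mk'.comp (hf.subtype_mk h)

lemma continuous_of_continuous_comp_mk' [ContinuousConstSMul K V] {Z : Type*} [TopologicalSpace Z]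
    {s : Set (Projectivization K V)} {f : s → Z}
    (hf : Continuous fun v : mk' K ⁻¹' s => f ⟨mk' K v.1, v.2⟩) : Continuous f :=
  (isOpenQuotientMap_mk'.restrictPreimage s).isQuotientMap.continuous_iff.2 hf

lemma continuous_mk_map_rep [ContinuousConstSMul K V] (L : V →L[K] W) {X : Type*}
    [TopologicalSpace X] {f : X → Projectivization K V} (hf : Continuous f)
    (hL : ∀ x, L (f x).rep ≠ 0) : Continuous fun x => mk K (L (f x).rep) (hL x) := by
  have hmap : Continuous fun x : {x : Projectivization K V | L x.rep ≠ 0} =>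
      mk K (L x.1.rep) x.2 := by
    refine continuous_of_continuous_comp_mk' ?_
    simp only [mk'_eq_mk, mk_map_rep_mk]
    exact continuous_mk
      (L.continuous.comp (continuous_subtype_val.comp continuous_subtype_val)) _
  exact hmap.comp (hf.subtype_mk hL)

end Projectivization

section Coordinates

variable {K κ μ : Type*} [Field K]

lemma exists_rep_mk_eq_mul (v : κ → K) (hv : v ≠ 0) :
    ∃ a : K, a ≠ 0 ∧ ∀ i, (mk K v hv).rep i = a * v i := by
  obtain ⟨a, ha⟩ := exists_smul_eq_mk_rep K v hv
  exact ⟨a, a.ne_zero, fun i => (congrFun ha i).symm⟩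

lemma rep_mk_apply_eq_zero_iff {v : κ → K} (hv : v ≠ 0) (i : κ) :
    (mk K v hv).rep i = 0 ↔ v i = 0 :=
  map_rep_mk_eq_zero_iff (LinearMap.proj i : (κ → K) →ₗ[K] K) hv

lemma rep_mk_div_rep_mk {v : κ → K} (hv : v ≠ 0) (i j : κ) :
    (mk K v hv).rep i / (mk K v hv).rep j = v i / v j := by
  obtain ⟨a, ha, hav⟩ := exists_rep_mk_eq_mul v hv
  rw [hav, hav, mul_div_mul_left _ _ ha]

lemma mk_eq_mk_of_mul_eq_mul {v w : κ → K} (hv : v ≠ 0) (hw : w ≠ 0)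
    (h : ∀ i j, v i * w j = v j * w i) : mk K v hv = mk K w hw := by
  obtain ⟨j, hj : w j ≠ 0⟩ := Function.ne_iff.mp hw
  refine (mk_eq_mk_iff' K v w hv hw).2 ⟨v j / w j, funext fun i => ?_⟩
  rw [Pi.smul_apply, smul_eq_mul, div_mul_eq_mul_div, ← h, mul_div_cancel_right₀ _ hj]

variable [TopologicalSpace K]

lemma continuous_val_apply (i : κ) : Continuous fun v : {v : κ → K // v ≠ 0} => v.1 i :=
  (continuous_apply i).comp continuous_subtype_val

lemma isClosed_setOf_rep_mul_rep_eq [ContinuousMul K] [T2Space K] (i j : κ) (i' j' : μ) :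
    IsClosed {q : Projectivization K (κ → K) × Projectivization K (μ → K) |
      q.1.rep i * q.2.rep j' = q.1.rep j * q.2.rep i'} := by
  rw [← (isOpenQuotientMap_mk'.prodMap isOpenQuotientMap_mk').isQuotientMap.isClosed_preimage]
  have preimage_eq : Prod.map (mk' K) (mk' K) ⁻¹'
        {q : Projectivization K (κ → K) × Projectivization K (μ → K) |
          q.1.rep i * q.2.rep j' = q.1.rep j * q.2.rep i'} =
      {q | q.1.1 i * q.2.1 j' = q.1.1 j * q.2.1 i'} := by
    ext ⟨v, w⟩
    obtain ⟨a, ha, hav⟩ := exists_rep_mk_eq_mul v.1 v.2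
    obtain ⟨b, hb, hbw⟩ := exists_rep_mk_eq_mul w.1 w.2
    simp only [Set.mem_preimage, Set.mem_ofPred_eq, Prod.map, mk'_eq_mk, hav, hbw,
      mul_mul_mul_comm a _ b, mul_right_inj' (mul_ne_zero ha hb)]
  rw [preimage_eq]
  have continuous_mul_apply (i : κ) (j' : μ) : Continuous fun
      q : {v : κ → K // v ≠ 0} × {w : μ → K // w ≠ 0} => q.1.1 i * q.2.1 j' :=
    ((continuous_val_apply i).comp continuous_fst).mul
      ((continuous_val_apply j').comp continuous_snd)
  exact isClosed_eq (continuous_mul_apply i j') (continuous_mul_apply j i')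

end Coordinates

section Torus

variable {κ : Type}

lemma mk_mem_torusSet_iff {v : κ → ℂ} (hv : v ≠ 0) :
    mk ℂ v hv ∈ torusSet κ ↔ ∀ i, v i ≠ 0 :=
  forall_congr' fun i => (rep_mk_apply_eq_zero_iff hv i).not

lemma continuous_rep_div_rep (i j : κ) :
    Continuous fun x : torusSet κ => x.1.rep i / x.1.rep j := by
  refine continuous_of_continuous_comp_mk' ?_
  simp only [mk'_eq_mk, rep_mk_div_rep_mk]
  exact ((continuous_val_apply i).comp continuous_subtype_val).div
    ((continuous_val_apply j).comp continuous_subtype_val)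
    fun v => (mk_mem_torusSet_iff v.1.2).1 v.2 j

open Classical in
/-- The torus of `ℙ^κ` is identified with `(ℂ^×)^{κ \ {b}}` by normalising the `b`-th homogeneous
coordinate to `1`. -/
def torusHomeomorph (b : κ) : torusSet κ ≃ₜ ({i : κ // i ≠ b} → ℂˣ) where
  toFun x i := Units.mk0 (x.1.rep i / x.1.rep b) (div_ne_zero (x.2 _) (x.2 _))
  invFun u := ⟨mk ℂ (fun i => if h : i = b then 1 else (u ⟨i, h⟩ : ℂ))
      (fun h => by simpa using congrFun h b), (mk_mem_torusSet_iff _).2 fun i => by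
        split_ifs <;> simp⟩
  left_inv x := by
    have normalized_eq (i : κ) : (if i = b then (1 : ℂ) else x.1.rep i / x.1.rep b) =
        x.1.rep i / x.1.rep b := by
      split_ifs with h
      · rw [h, div_self (x.2 b)]
      · rfl
    refine Subtype.ext ((mk_eq_mk_of_mul_eq_mul _ x.1.rep_nonzero fun i j => ?_).trans x.1.mk_rep)
    simp only [Units.val_mk0, dite_eq_ite, normalized_eq]
    ring
  right_inv u := by
    funext i
    ext
    simp only [Units.val_mk0, rep_mk_div_rep_mk, dif_neg i.2, dif_pos, div_one]
  continuous_toFun := continuous_pi fun i =>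
    Units.isEmbedding_val₀.continuous_iff.2 (continuous_rep_div_rep i.1 b)
  continuous_invFun := by
    refine (continuous_mk (continuous_pi fun i => ?_) _).subtype_mk _
    split_ifs with h
    · exact continuous_const
    · exact Units.continuous_val.comp (continuous_apply _)

end Torus

section CoordMap

variable (R : Type*) {ι : Type*} [Semiring R] [TopologicalSpace R]

open Classical in
/-- The linear map `R^A → R^B` which restricts coordinates to `A ∩ B` and fills up with zeros on
`B \ A`. -/
def coordMap (A B : Set ι) : (A → R) →L[R] (B → R) where
  toFun v i := if h : i.1 ∈ A then v ⟨i.1, h⟩ else 0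
  map_add' v w := by
    ext i
    by_cases h : i.1 ∈ A <;> simp [h]
  map_smul' a v := by
    ext i
    by_cases h : i.1 ∈ A <;> simp [h]
  cont := continuous_pi fun i => by
    split_ifs <;> fun_prop

variable {R}

lemma coordMap_apply_of_mem {A B : Set ι} (v : A → R) (i : B) (h : i.1 ∈ A) :
    coordMap R A B v i = v ⟨i.1, h⟩ :=
  dif_pos h

lemma coordMap_apply_of_notMem {A B : Set ι} (v : A → R) (i : B) (h : i.1 ∉ A) :
    coordMap R A B v i = 0 :=
  dif_neg h

lemma coordMap_self (A : Set ι) (v : A → R) : coordMap R A A v = v :=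
  funext fun i => coordMap_apply_of_mem v i i.2

lemma coordMap_coordMap {A B C : Set ι} (v : A → R) (hv : ∀ i : A, i.1 ∉ B → v i = 0) :
    coordMap R B C (coordMap R A B v) = coordMap R A C v := by
  ext i
  by_cases hB : i.1 ∈ B
  · rw [coordMap_apply_of_mem _ i hB]
    rfl
  · rw [coordMap_apply_of_notMem _ i hB]
    by_cases hA : i.1 ∈ A
    · rw [coordMap_apply_of_mem v i hA, hv _ hB]
    · rw [coordMap_apply_of_notMem v i hA]

end CoordMap

section Closure

variable {ι : Type}

lemma pcoord_of_mem (p : PSp ι) {K : Set ι} (hK : K.Nonempty) {i : ι} (hi : i ∈ K) :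
    pcoord ι p K i = (p ⟨K, hK⟩).rep ⟨i, hi⟩ :=
  dif_pos ⟨hK, hi⟩

lemma rep_mul_rep_of_mem_Yn {p : PSp ι} (hp : p ∈ Yn ι) {I J : NES ι} (hIJ : I.1 ⊆ J.1)
    (i j : I.1) :
    (p I).rep i * (p J).rep ⟨j, hIJ j.2⟩ = (p I).rep j * (p J).rep ⟨i, hIJ i.2⟩ := by
  have isClosed_relation := (isClosed_setOf_rep_mul_rep_eq (K := ℂ) i j
    (⟨i, hIJ i.2⟩ : J.1) ⟨j, hIJ j.2⟩).preimage
    ((continuous_apply I).prodMk (continuous_apply J) : Continuous fun p : PSp ι => (p I, p J))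
  refine closure_minimal ?_ isClosed_relation hp
  rintro _ ⟨x, rfl⟩
  obtain ⟨a, -, ha⟩ := exists_rep_mk_eq_mul (fun i : I.1 => x.1.rep i.1)
    fun h => x.2 i (congrFun h i)
  obtain ⟨b, -, hb⟩ := exists_rep_mk_eq_mul (fun i : J.1 => x.1.rep i.1)
    fun h => x.2 i (congrFun h ⟨i, hIJ i.2⟩)
  simp only [Set.mem_preimage, Set.mem_ofPred_eq, rho, ha, hb]
  ring

lemma apply_eq_mk_coordMap_of_mem_Yn {p : PSp ι} (hp : p ∈ Yn ι) {I J : NES ι} (hIJ : I.1 ⊆ J.1)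
    (h : coordMap ℂ J.1 I.1 (p J).rep ≠ 0) : p I = mk ℂ (coordMap ℂ J.1 I.1 (p J).rep) h := by
  rw [← (p I).mk_rep]
  refine mk_eq_mk_of_mul_eq_mul _ h fun i j => ?_
  rw [coordMap_apply_of_mem _ i (hIJ i.2), coordMap_apply_of_mem _ j (hIJ j.2),
    rep_mul_rep_of_mem_Yn hp hIJ]

lemma exists_mem_eq_sInf_image (w : ι → ℕ) (I : NES ι) : ∃ i ∈ I.1, w i = sInf (w '' I.1) :=
  Nat.sInf_mem (I.2.image w)

lemma sInf_image_le (w : ι → ℕ) {I : Set ι} {i : ι} (hi : i ∈ I) : sInf (w '' I) ≤ w i :=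
  Nat.sInf_le ⟨i, hi, rfl⟩

/-- The curve `ε ↦ ρ([ε ^ w i * τ i])` attached to a weight `w` and a point `τ` of the torus,
extended over `ε = 0`: the `I`-component is divided by the smallest power of `ε` occurring in it. -/
def degeneration (w : ι → ℕ) (τ : ι → ℂˣ) (ε : ℂ) : PSp ι := fun I =>
  mk ℂ (fun i : I.1 => ε ^ (w i - sInf (w '' I.1)) * τ i) fun h0 => by
    obtain ⟨i, hi, hw⟩ := exists_mem_eq_sInf_image w I
    simpa [hw] using congrFun h0 ⟨i, hi⟩

lemma continuous_degeneration (w : ι → ℕ) (τ : ι → ℂˣ) : Continuous (degeneration w τ) :=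
  continuous_pi fun _ => continuous_mk (by fun_prop) _

lemma degeneration_mem_range_rho [Nonempty ι] (w : ι → ℕ) (τ : ι → ℂˣ) {ε : ℂ} (hε : ε ≠ 0) :
    degeneration w τ ε ∈ Set.range (rho ι) := by
  let x : ι → ℂ := fun i => ε ^ w i * τ i
  have hx (i : ι) : x i ≠ 0 := mul_ne_zero (pow_ne_zero _ hε) (τ i).ne_zero
  have hx0 : x ≠ 0 := fun h => hx (Classical.arbitrary ι) (congrFun h _)
  refine ⟨⟨mk ℂ x hx0, (mk_mem_torusSet_iff hx0).2 hx⟩, funext fun I => ?_⟩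
  refine mk_eq_mk_of_mul_eq_mul _ _ fun i j => ?_
  have pow_eq (i : I.1) :
      ε ^ w i = ε ^ sInf (w '' I.1) * ε ^ (w i - sInf (w '' I.1)) := by
    rw [← pow_add, Nat.add_sub_cancel' (sInf_image_le w i.2)]
  obtain ⟨a, -, ha⟩ := exists_rep_mk_eq_mul x hx0
  simp only [ha, x]
  rw [pow_eq i, pow_eq j]
  ring

lemma degeneration_zero_mem_Yn [Nonempty ι] (w : ι → ℕ) (τ : ι → ℂˣ) :
    degeneration w τ 0 ∈ Yn ι := by
  refine mem_closure_of_tendsto (b := nhdsWithin (0 : ℂ) {0}ᶜ)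
    (((continuous_degeneration w τ).tendsto 0).mono_left nhdsWithin_le_nhds) ?_
  filter_upwards [self_mem_nhdsWithin] with ε hε using degeneration_mem_range_rho w τ hε

end Closure

/-- Currying of functions on a sigma type, as a homeomorphism. -/
def piSigmaHomeomorph {α : Type*} (β : α → Type*) (X : Type*) [TopologicalSpace X] :
    ((Σ a, β a) → X) ≃ₜ (∀ a, β a → X) where
  toEquiv := Equiv.piCurry fun _ _ => X
  continuous_toFun := continuous_pi fun _ => continuous_pi fun _ => continuous_apply _
  continuous_invFun := continuous_pi fun x => (continuous_apply x.2).comp (continuous_apply x.1)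

namespace SubsetChain

variable {ι : Type} (c : SubsetChain ι)

lemma antitone_K : Antitone c.K := by
  refine antitone_nat_of_succ_le fun ℓ => ?_
  rcases lt_or_ge ℓ c.m with h | h
  · exact (c.strict ℓ h).subset
  · rw [c.beyond (ℓ + 1) (by omega)]
    exact Set.empty_subset _

/-- The difference `S = K_s \ K_{s+1}` of consecutive members of the chain. -/
abbrev stratum (s : ℕ) : Set ι := c.K s \ c.K (s + 1)

lemma nonempty_stratum (s : Fin c.m) : (c.stratum s).Nonempty :=
  Set.nonempty_of_ssubset (c.strict s s.2)

/-- The member `K_s` of the chain as an index of a factor of `P`. -/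
abbrev nes (s : Fin c.m) : NES ι := ⟨c.K s, (c.nonempty_stratum s).mono Set.sdiff_subset⟩

/-- The index of the stratum containing `i`. -/
def index (i : ι) : ℕ := sInf {ℓ | i ∉ c.K (ℓ + 1)}

lemma notMem_K_index_add_one (i : ι) : i ∉ c.K (c.index i + 1) :=
  Nat.sInf_mem (s := {ℓ | i ∉ c.K (ℓ + 1)}) ⟨c.m, by simp [c.beyond (c.m + 1) (by omega)]⟩

lemma mem_K_iff {i : ι} {s : ℕ} : i ∈ c.K s ↔ s ≤ c.index i := by
  constructor
  · intro hi
    by_contra! hlt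
    exact c.notMem_K_index_add_one i (c.antitone_K hlt hi)
  · intro hs
    cases s with
    | zero => simp [c.first]
    | succ s => exact not_not.1 (Nat.notMem_of_lt_sInf hs)

lemma mem_stratum_iff {i : ι} {s : ℕ} : i ∈ c.stratum s ↔ c.index i = s := by
  rw [Set.mem_sdiff, mem_K_iff, mem_K_iff]
  omega

lemma mem_stratum_index (i : ι) : i ∈ c.stratum (c.index i) :=
  c.mem_stratum_iff.2 rfl

lemma eq_of_mem_stratum {i : ι} {s s' : Fin c.m} (hs : i ∈ c.stratum s)
    (hs' : i ∈ c.stratum s') : s = s' :=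
  Fin.ext ((c.mem_stratum_iff.1 hs).symm.trans (c.mem_stratum_iff.1 hs'))

lemma index_lt (i : ι) : c.index i < c.m := by
  have : i ∉ c.K c.m := by simp [c.last]
  rwa [mem_K_iff, not_le] at this

/-- The largest `s` such that `I ⊆ K_s`. -/
def level (I : NES ι) : Fin c.m :=
  ⟨sInf (c.index '' I.1), by
    obtain ⟨i, -, hi⟩ := exists_mem_eq_sInf_image c.index I
    exact hi ▸ c.index_lt i⟩

lemma subset_K_level (I : NES ι) : I.1 ⊆ c.K (c.level I) := fun _ hi =>
  c.mem_K_iff.2 (sInf_image_le c.index hi)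

lemma exists_mem_stratum_level (I : NES ι) : ∃ i ∈ I.1, i ∈ c.stratum (c.level I) := by
  obtain ⟨i, hi, h⟩ := exists_mem_eq_sInf_image c.index I
  exact ⟨i, hi, c.mem_stratum_iff.2 h⟩

lemma level_nes (s : Fin c.m) : c.level (c.nes s) = s := by
  apply le_antisymm
  · obtain ⟨i, hi⟩ := c.nonempty_stratum s
    exact (sInf_image_le c.index hi.1).trans_eq (c.mem_stratum_iff.1 hi)
  · obtain ⟨i, hi, h⟩ := c.exists_mem_stratum_level (c.nes s)
    exact (c.mem_K_iff.1 hi).trans_eq (c.mem_stratum_iff.1 h)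

lemma chainK_eq_iff (p : PSp ι) : (∀ ℓ ≤ c.m, chainK ι p ℓ = c.K ℓ) ↔
    ∀ (s : Fin c.m) (i : c.K s), (p (c.nes s)).rep i = 0 ↔ i.1 ∈ c.K (s + 1) := by
  have step (s : Fin c.m) : {k ∈ c.K s | pcoord ι p (c.K s) k = 0} = c.K (s + 1) ↔
      ∀ i : c.K s, (p (c.nes s)).rep i = 0 ↔ i.1 ∈ c.K (s + 1) := by
    rw [Set.ext_iff, Subtype.forall]
    refine forall_congr' fun i => ?_
    by_cases hi : i ∈ c.K s
    · simp [hi, pcoord_of_mem p (c.nes s).2 hi]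
    · simp [hi, Set.notMem_subset (c.antitone_K s.1.le_succ) hi]
  simp_rw [← step]
  constructor
  · intro h s
    rw [← h (s + 1) s.2, chainK, h s s.2.le]
  · intro h ℓ hℓ
    induction ℓ with
    | zero => exact c.first.symm
    | succ ℓ ih => rw [chainK, ih (by omega), h ⟨ℓ, hℓ⟩]

variable {c}

lemma rep_eq_zero_iff_of_mem_Ochain {p : PSp ι} (hp : p ∈ Ochain ι c) (s : Fin c.m) (i : c.K s) :
    (p (c.nes s)).rep i = 0 ↔ i.1 ∈ c.K (s + 1) :=
  (c.chainK_eq_iff p).1 hp.2 s i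

lemma coordMap_stratum_ne_zero {p : PSp ι} (hp : p ∈ Ochain ι c) (s : Fin c.m)
    (i : c.stratum s) : coordMap ℂ (c.K s) (c.stratum s) (p (c.nes s)).rep i ≠ 0 := by
  rw [coordMap_apply_of_mem _ i i.2.1]
  exact (rep_eq_zero_iff_of_mem_Ochain hp s _).not.2 i.2.2

/-- The map `p ↦ ([a_i^{K_s}]_{i ∈ S_s})_s`. -/
def toTori (p : Ochain ι c) (s : Fin c.m) : torusSet (c.stratum s) :=
  have ne_zero := coordMap_stratum_ne_zero p.2 s
  ⟨Projectivization.mk ℂ (coordMap ℂ (c.K s) (c.stratum s) (p.1 (c.nes s)).rep) fun h =>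
      have ⟨i, hi⟩ := c.nonempty_stratum s
      ne_zero ⟨i, hi⟩ (congrFun h ⟨i, hi⟩),
    (mk_mem_torusSet_iff _).2 ne_zero⟩

lemma continuous_toTori : Continuous (toTori : Ochain ι c → _) :=
  continuous_pi fun s => Continuous.subtype_mk (continuous_mk_map_rep _
    ((continuous_apply (c.nes s)).comp continuous_subtype_val) _) _

lemma coordMap_rep_ne_zero {I : NES ι} {s : Fin c.m} (hs : c.level I = s)
    (x : torusSet (c.stratum s)) : coordMap ℂ (c.stratum s) I.1 x.1.rep ≠ 0 := by
  subst hs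
  obtain ⟨i, hiI, hi⟩ := c.exists_mem_stratum_level I
  intro h
  refine x.2 ⟨i, hi⟩ ?_
  rw [← coordMap_apply_of_mem x.1.rep ⟨i, hiI⟩ hi, h, Pi.zero_apply]

/-- The point of `P` whose `I`-component is `t_s`, restricted to `I ∩ S_s` and extended by zero,
where `s` is the level of `I`. It is the inverse image of `t` under `toTori`. -/
def glue (t : ∀ s : Fin c.m, torusSet (c.stratum s)) : PSp ι := fun I =>
  Projectivization.mk ℂ (coordMap ℂ (c.stratum (c.level I)) I.1 (t (c.level I)).1.rep)
    (coordMap_rep_ne_zero rfl _)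

lemma glue_apply (t : ∀ s : Fin c.m, torusSet (c.stratum s)) {I : NES ι} {s : Fin c.m}
    (hs : c.level I = s) : glue t I = Projectivization.mk ℂ
      (coordMap ℂ (c.stratum s) I.1 (t s).1.rep) (coordMap_rep_ne_zero hs _) := by
  subst hs
  rfl

lemma continuous_glue :
    Continuous (glue : (∀ s : Fin c.m, torusSet (c.stratum s)) → PSp ι) :=
  continuous_pi fun I => continuous_mk_map_rep _
    (continuous_subtype_val.comp (continuous_apply (c.level I))) _

/-- The family of all coordinates of a tuple `t`, in the representatives chosen by `rep`. -/
def coord (t : ∀ s : Fin c.m, torusSet (c.stratum s)) (i : ι) : ℂˣ :=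
  Units.mk0 ((t ⟨c.index i, c.index_lt i⟩).1.rep ⟨i, c.mem_stratum_index i⟩) ((t _).2 _)

lemma coord_of_mem_stratum (t : ∀ s : Fin c.m, torusSet (c.stratum s)) {s : Fin c.m} {i : ι}
    (hi : i ∈ c.stratum s) : (coord t i : ℂ) = (t s).1.rep ⟨i, hi⟩ := by
  obtain rfl : s = ⟨c.index i, c.index_lt i⟩ := c.eq_of_mem_stratum hi (c.mem_stratum_index i)
  rfl

lemma degeneration_index_coord_zero (t : ∀ s : Fin c.m, torusSet (c.stratum s)) :
    degeneration c.index (coord t) 0 = glue t := by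
  funext I
  unfold degeneration glue
  congr 1
  funext i
  by_cases hi : i.1 ∈ c.stratum (c.level I)
  · have exponent_eq : c.index i - sInf (c.index '' I.1) = 0 :=
      Nat.sub_eq_zero_of_le (c.mem_stratum_iff.1 hi).le
    rw [coordMap_apply_of_mem _ i hi, coord_of_mem_stratum t hi, exponent_eq, pow_zero, one_mul]
  · have exponent_ne : c.index i - sInf (c.index '' I.1) ≠ 0 := fun h =>
      hi (c.mem_stratum_iff.2 ((Nat.le_of_sub_eq_zero h).antisymm (sInf_image_le c.index i.2)))
    rw [coordMap_apply_of_notMem _ i hi, zero_pow exponent_ne, zero_mul]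

lemma glue_mem_Ochain [Nonempty ι] (t : ∀ s : Fin c.m, torusSet (c.stratum s)) :
    glue t ∈ Ochain ι c := by
  refine ⟨degeneration_index_coord_zero t ▸ degeneration_zero_mem_Yn _ _,
    (c.chainK_eq_iff _).2 fun s i => ?_⟩
  rw [glue_apply t (c.level_nes s), rep_mk_apply_eq_zero_iff]
  by_cases hi : i.1 ∈ c.K (s + 1)
  · have notMem : i.1 ∉ c.stratum s := fun h => h.2 hi
    simp only [coordMap_apply_of_notMem _ i notMem, hi]
  · have mem : i.1 ∈ c.stratum s := ⟨i.2, hi⟩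
    simp only [coordMap_apply_of_mem _ i mem, (t s).2 _, hi]

lemma glue_toTori (p : Ochain ι c) : glue (toTori p) = p.1 := by
  funext I
  let s := c.level I
  have coordMap_eq : coordMap ℂ (c.stratum s) I.1
      (coordMap ℂ (c.K s) (c.stratum s) (p.1 (c.nes s)).rep) =
        coordMap ℂ (c.K s) I.1 (p.1 (c.nes s)).rep :=
    coordMap_coordMap _ fun i hi => (rep_eq_zero_iff_of_mem_Ochain p.2 s i).2 <|
      not_not.1 fun h => hi ⟨i.2, h⟩
  have glue_eq := mk_map_rep_mk (coordMap ℂ (c.stratum s) I.1) _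
    (coordMap_rep_ne_zero rfl (toTori p s))
  simp only [coordMap_eq] at glue_eq
  exact glue_eq.trans
    (apply_eq_mk_coordMap_of_mem_Yn (J := c.nes s) p.2.1 (c.subset_K_level I) _).symm

lemma toTori_glue [Nonempty ι] (t : ∀ s : Fin c.m, torusSet (c.stratum s)) :
    toTori ⟨glue t, glue_mem_Ochain t⟩ = t := by
  funext s
  refine Subtype.ext ?_
  have coordMap_eq : coordMap ℂ (c.K s) (c.stratum s)
      (coordMap ℂ (c.stratum s) (c.K s) (t s).1.rep) = (t s).1.rep :=
    (coordMap_coordMap _ fun i hi => absurd i.2.1 hi).trans (coordMap_self _ _)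
  simp only [toTori, glue_apply t (c.level_nes s)]
  simp_rw [mk_map_rep_mk, coordMap_eq, mk_rep]

lemma exists_toTori_rep_eq_mul_pcoord (p : Ochain ι c) (s : Fin c.m) :
    ∃ d : ℂ, d ≠ 0 ∧ ∀ i : c.stratum s,
      (toTori p s).1.rep i = d * pcoord ι p.1 (c.K s) i := by
  obtain ⟨d, hd, h⟩ := exists_rep_mk_eq_mul
    (coordMap ℂ (c.K s) (c.stratum s) (p.1 (c.nes s)).rep) _
  refine ⟨d, hd, fun i => (h i).trans ?_⟩
  rw [coordMap_apply_of_mem _ i i.2.1, pcoord_of_mem p.1 (c.nes s).2 i.2.1]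

variable (c)

/-- The map `p ↦ ([a_i^{K_s}]_{i ∈ S_s})_s` as a homeomorphism. -/
def toriHomeomorph [Nonempty ι] : Ochain ι c ≃ₜ ∀ s : Fin c.m, torusSet (c.stratum s) where
  toFun := toTori
  invFun t := ⟨glue t, glue_mem_Ochain t⟩
  left_inv p := Subtype.ext (glue_toTori p)
  right_inv := toTori_glue
  continuous_toFun := continuous_toTori
  continuous_invFun := continuous_glue.subtype_mk _

/-- Removing from each stratum `S_s` a point `b s` leaves the complement of `{b s | s}`. -/
def sigmaStratumEquiv (b : ∀ s : Fin c.m, c.stratum s) :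
    ↥(Set.range fun s => (b s).1)ᶜ ≃ Σ s : Fin c.m, {i : c.stratum s // i ≠ b s} where
  toFun i := ⟨⟨c.index i, c.index_lt i⟩, ⟨i, c.mem_stratum_index i⟩,
    fun h => i.2 ⟨_, congrArg Subtype.val h.symm⟩⟩
  invFun x := ⟨x.2.1, by
    obtain ⟨s, ⟨i, hi⟩, hne⟩ := x
    rintro ⟨s', rfl : (b s').1 = i⟩
    obtain rfl := c.eq_of_mem_stratum (b s').2 hi
    exact hne rfl⟩
  left_inv _ := rfl
  right_inv := by
    rintro ⟨s, ⟨i, hi⟩, hne⟩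
    obtain rfl : s = ⟨c.index i, c.index_lt i⟩ := c.eq_of_mem_stratum hi (c.mem_stratum_index i)
    rfl

lemma encard_range_of_mem_stratum (b : ∀ s : Fin c.m, c.stratum s) :
    (Set.range fun s => (b s).1).encard = c.m := by
  have injective : Function.Injective fun s => (b s).1 := fun s s' (h : (b s).1 = b s') =>
    c.eq_of_mem_stratum (b s).2 (h ▸ (b s').2)
  rw [← Set.image_univ, injective.encard_image, Set.encard_univ, ENat.card_eq_coe_fintype_card,
    Fintype.card_fin]

/-- The coordinates `a_i / a_{b s}`, for `i ∈ S_s` distinct from the base points `b s`, identify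
`O` with a torus `(ℂ^×)^{ι \ {b s | s}}`. -/
def unitsHomeomorph [Nonempty ι] (b : ∀ s : Fin c.m, c.stratum s) :
    Ochain ι c ≃ₜ (↥(Set.range fun s => (b s).1)ᶜ → ℂˣ) :=
  c.toriHomeomorph.trans <| (Homeomorph.piCongrRight fun s => torusHomeomorph (b s)).trans <|
    (piSigmaHomeomorph _ ℂˣ).symm.trans <|
      (Homeomorph.piCongrLeft (Y := fun _ => ℂˣ) (c.sigmaStratumEquiv b)).symm

end SubsetChain

lemma nonempty_compl_equiv_fin {n m : ℕ} {B : Set (Fin n)} (hB : B.encard = m) :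
    Nonempty (↥Bᶜ ≃ Fin (n - m)) := by
  refine ⟨Finite.equivFinOfCardEq ?_⟩
  rw [Nat.card_coe_set_eq, Set.ncard_compl, Nat.card_fin, Set.ncard, hB, ENat.toNat_natCast]

theorem stmt4_general {ι : Type} [Nonempty ι] (c : SubsetChain ι) :
    (∃ e : ↥(Ochain ι c) ≃ₜ ((s : Fin c.m) → ↥(torusSet ↥(c.K s.1 \ c.K (s.1 + 1)))),
      ∀ (p : ↥(Ochain ι c)) (s : Fin c.m), ∃ d : ℂ, d ≠ 0 ∧
        ∀ i : ↥(c.K s.1 \ c.K (s.1 + 1)),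
          (e p s).1.rep i = d * pcoord ι p.1 (c.K s.1) i.1) ∧
    ∃ B : Set ι, B.encard = c.m ∧ Nonempty (↥(Ochain ι c) ≃ₜ (↥Bᶜ → ℂˣ)) :=
  have b (s : Fin c.m) : c.stratum s := (c.nonempty_stratum s).to_subtype.some
  ⟨⟨c.toriHomeomorph, SubsetChain.exists_toTori_rep_eq_mul_pcoord⟩,
    _, c.encard_range_of_mem_stratum b, ⟨c.unitsHomeomorph b⟩⟩

/-- The orbit structure of the pieces: for a chain `[n] = K₁ ⊋ ⋯ ⊋ K_{m+1} = ∅`, with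
`S_s = K_s \ K_{s+1}`, the map sending `p ∈ O_{K₁,…,K_{m+1}}` to the tuple
`([a^{K_s}_i]_{i ∈ S_s})_{1 ≤ s ≤ m}` is a well-defined homeomorphism onto
`T_{S_1} × ⋯ × T_{S_m}`; in particular `O_{K₁,…,K_{m+1}}` is homeomorphic to a complex
torus `(ℂ^×)^{n-m}` of dimension `n - m`. -/
theorem stmt4 (n : ℕ) (hn : 1 ≤ n) (c : SubsetChain (Fin n)) :
    (∃ e : ↥(Ochain (Fin n) c) ≃ₜ
        ((s : Fin c.m) → ↥(torusSet ↥(c.K s.1 \ c.K (s.1 + 1)))),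
      ∀ (p : ↥(Ochain (Fin n) c)) (s : Fin c.m), ∃ d : ℂ, d ≠ 0 ∧
        ∀ i : ↥(c.K s.1 \ c.K (s.1 + 1)),
          (e p s).1.rep i = d * pcoord (Fin n) p.1 (c.K s.1) i.1) ∧
    Nonempty (↥(Ochain (Fin n) c) ≃ₜ (Fin (n - c.m) → ℂˣ)) := by
  have : Nonempty (Fin n) := Fin.pos_iff_nonempty.1 hn
  obtain ⟨tori, B, hB, ⟨e⟩⟩ := stmt4_general c
  obtain ⟨reindex⟩ := nonempty_compl_equiv_fin hB
  exact ⟨tori, ⟨e.trans (Homeomorph.piCongrLeft (Y := fun _ => ℂˣ) reindex)⟩⟩
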